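/- Assume dim A1 ≤ 1 and let A be a finite-dimensional subspace of V with A1 < A (so A1 is a proper subspace of A, and π(A) = A1 since π fixes A1 pointwise). Then for every r ∈ ℕ and every finite-dimensional subspace B ∈ K_{A1} with A ≤ B, there exists a finite-dimensional subspace C ∈ K_{A1} such that for every coloring ξ : {U ≤ C : π(U) = A1 and dim U = dim A} → {0, ..., r−1} there exists a subspace B' ≤ C with π(B') = A1 and dim B' = dim B such that ξ is constant on the set {U ≤ B' : π(U) = A1 and dim U = dim A}. -/

import Mathlib

open Module Submodule

namespace SubspaceRamsey

section Prelim

variable {F : Type} [Field F] {X Y W E : Type*} [AddCommGroup X] [Module F X]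
  [AddCommGroup Y] [Module F Y] [AddCommGroup W] [Module F W] [AddCommGroup E] [Module F E]

lemma finrank_map_of_injective {f : X →ₗ[F] Y} (hf : Function.Injective f) (U : Submodule F X) :
    finrank F (U.map f) = finrank F U :=
  (equivMapOfInjective f hf U).symm.finrank_eq

lemma finrank_map_of_disjoint_ker {f : X →ₗ[F] Y} {U : Submodule F X}
    (h : Disjoint U (LinearMap.ker f)) : finrank F (U.map f) = finrank F U := by
  rw [← LinearMap.range_domRestrict]
  exact LinearMap.finrank_range_of_inj (LinearMap.injective_domRestrict_iff.2 h)

lemma finrank_prod_submodule (U : Submodule F X) (T : Submodule F Y) [FiniteDimensional F U]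
    [FiniteDimensional F T] : finrank F (U.prod T) = finrank F U + finrank F T := by
  rw [← finrank_prod]
  let e : U.prod T ≃ₗ[F] U × T :=
    { toFun := fun x ↦ (⟨x.1.1, x.2.1⟩, ⟨x.1.2, x.2.2⟩)
      map_add' := fun _ _ ↦ rfl
      map_smul' := fun _ _ ↦ rfl
      invFun := fun x ↦ ⟨(x.1.1, x.2.1), x.1.2, x.2.2⟩ }
  exact e.finrank_eq

/-- A linear map with larger kernel receives an injection over the common target. -/
lemma exists_injective_over [FiniteDimensional F X] [FiniteDimensional F Y]
    (p : X →ₗ[F] W) (q : Y →ₗ[F] W) (hp : Function.Surjective p) (hq : Function.Surjective q)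
    (h : finrank F X ≤ finrank F Y) :
    ∃ J : X →ₗ[F] Y, Function.Injective J ∧ q ∘ₗ J = p := by
  have hker : finrank F (LinearMap.ker p) ≤ finrank F (LinearMap.ker q) := by
    have h1 := p.finrank_range_add_finrank_ker
    have h2 := q.finrank_range_add_finrank_ker
    rw [LinearMap.range_eq_top.2 hp] at h1
    rw [LinearMap.range_eq_top.2 hq] at h2
    omega
  obtain ⟨f, hf⟩ := finrank_le_iff_exists_linearMap.1 hker
  obtain ⟨s, hs⟩ := p.exists_rightInverse_of_surjective (LinearMap.range_eq_top.2 hp)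
  obtain ⟨t, ht⟩ := q.exists_rightInverse_of_surjective (LinearMap.range_eq_top.2 hq)
  have hs' : ∀ w, p (s w) = w := fun w ↦ LinearMap.congr_fun hs w
  have ht' : ∀ w, q (t w) = w := fun w ↦ LinearMap.congr_fun ht w
  let g : X →ₗ[F] LinearMap.ker p :=
    (LinearMap.id - s ∘ₗ p).codRestrict _ (fun x ↦ by simp [hs'])
  have hqJ : q ∘ₗ (t ∘ₗ p + (LinearMap.ker q).subtype ∘ₗ f ∘ₗ g) = p := by
    ext x
    simp [ht']
  refine ⟨t ∘ₗ p + (LinearMap.ker q).subtype ∘ₗ f ∘ₗ g, ?_, hqJ⟩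
  rw [injective_iff_map_eq_zero]
  intro x hx
  have hpx : p x = 0 := by rw [← hqJ, LinearMap.comp_apply, hx, map_zero]
  have hg : f (g x) = 0 := by
    apply Subtype.ext
    simpa [hpx] using hx
  have := congrArg Subtype.val ((injective_iff_map_eq_zero f).1 hf _ hg)
  simpa [g, hpx] using this

/-- A subspace of `E × F` meeting the vertical axis trivially is a graph over its shadow. -/
lemma exists_eq_map_prod (U : Submodule F (E × F))
    (hU : Disjoint U (LinearMap.ker (LinearMap.fst F E F))) :
    ∃ x : E →ₗ[F] F, U = (U.map (LinearMap.fst F E F)).map (LinearMap.id.prod x) := by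
  obtain ⟨g, hg⟩ := ((LinearMap.fst F E F).domRestrict U).exists_leftInverse_of_injective
    (LinearMap.ker_eq_bot.2 (LinearMap.injective_domRestrict_iff.2 hU))
  refine ⟨LinearMap.snd F E F ∘ₗ U.subtype ∘ₗ g, ?_⟩
  have key : ∀ u ∈ U, (g u.1 : E × F) = u := fun u hu ↦
    congrArg Subtype.val (LinearMap.congr_fun hg ⟨u, hu⟩)
  rw [← Submodule.map_comp]
  conv_lhs => rw [← Submodule.map_id U]
  ext y
  simp only [Submodule.mem_map]
  refine exists_congr fun u ↦ and_congr_right fun hu ↦ ?_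
  simp [key u hu]

/-- A subspace of `E × F` meeting the vertical axis nontrivially is a cylinder. -/
lemma eq_prod_top (U : Submodule F (E × F))
    (hU : ¬ Disjoint U (LinearMap.ker (LinearMap.fst F E F))) :
    U = (U.map (LinearMap.fst F E F)).prod ⊤ := by
  obtain ⟨⟨e, c⟩, hu, hk, h0⟩ : ∃ u ∈ U, LinearMap.fst F E F u = 0 ∧ u ≠ 0 := by
    simpa [Submodule.disjoint_def] using hU
  obtain rfl : e = 0 := hk
  have hc : c ≠ 0 := by simpa using h0
  refine le_antisymm (fun u hu ↦ ⟨mem_map_of_mem hu, trivial⟩) ?_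
  rintro ⟨a, b⟩ ⟨⟨⟨a', b'⟩, hv, hva⟩, -⟩
  obtain rfl : a' = a := hva
  have := U.add_mem hv (U.smul_mem ((b - b') / c) hu)
  simpa [hc] using this

end Prelim

section HalesJewett

variable {F : Type} [Field F] [Finite F]

/-- Consequence of the Hales–Jewett theorem: inside `E × (ι → F)` there is a copy of `E × F` over
`E` on which the colour of a subspace transversal to the vertical axis depends only on its shadow
in `E`. -/
lemma exists_transversal_color (E : Type*) [AddCommGroup E] [Module F E] [FiniteDimensional F E]
    (κ : Type) [Finite κ] :
    ∃ (ι : Type) (_ : Fintype ι), ∀ χ : Submodule F (E × (ι → F)) → κ,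
      ∃ J : E × F →ₗ[F] E × (ι → F), Function.Injective J ∧
        LinearMap.fst F E (ι → F) ∘ₗ J = LinearMap.fst F E F ∧
        ∀ U : Submodule F (E × F), Disjoint U (LinearMap.ker (LinearMap.fst F E F)) →
          χ (U.map J) = χ (((U.map (LinearMap.fst F E F)).prod ⊥).map J) := by
  classical
  have : Finite E := Module.finite_of_finite F
  have : Finite (E →ₗ[F] F) := Module.finite_of_finite F
  have : Finite (Submodule F E) := Finite.of_injective _ SetLike.coe_injective
  obtain ⟨ι, _, hι⟩ :=
    Combinatorics.Line.exists_mono_in_high_dimension (E →ₗ[F] F) (Submodule F E → κ)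
  refine ⟨ι, inferInstance, fun χ ↦ ?_⟩
  obtain ⟨l, c, hl⟩ := hι fun w U ↦ χ (U.map (LinearMap.id.prod (LinearMap.pi w)))
  let z : ι → F := fun i ↦ if l.idxFun i = none then 1 else 0
  let g : E →ₗ[F] ι → F := LinearMap.pi fun i ↦ (l.idxFun i).getD 0
  let J : E × F →ₗ[F] E × (ι → F) :=
    (LinearMap.fst F E F).prod (g ∘ₗ LinearMap.fst F E F + (LinearMap.snd F E F).smulRight z)
  have hJ : ∀ x : E →ₗ[F] F,
      J ∘ₗ LinearMap.id.prod x = LinearMap.id.prod (LinearMap.pi (l x)) := by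
    intro x
    refine LinearMap.ext fun e ↦ Prod.ext rfl (funext fun i ↦ ?_)
    cases h : l.idxFun i <;> simp [J, g, z, h]
  refine ⟨J, ?_, rfl, fun U hU ↦ ?_⟩
  · obtain ⟨i, hi⟩ := l.proper
    rw [injective_iff_map_eq_zero]
    rintro ⟨e, a⟩ h
    obtain rfl : e = 0 := congrArg Prod.fst h
    have := congrFun (congrArg Prod.snd h) i
    simpa [J, z, hi] using this
  · obtain ⟨x, hx⟩ := exists_eq_map_prod U hU
    have h0 : (U.map (LinearMap.fst F E F)).prod ⊥ =
        (U.map (LinearMap.fst F E F)).map (LinearMap.id.prod (0 : E →ₗ[F] F)) := by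
      ext ⟨a, b⟩
      simp only [Submodule.mem_prod, Submodule.mem_bot, Submodule.mem_map]
      constructor
      · rintro ⟨h, rfl⟩
        exact ⟨a, h, rfl⟩
      · rintro ⟨a', h, h'⟩
        obtain rfl : a' = a := congrArg Prod.fst h'
        exact ⟨h, (congrArg Prod.snd h').symm⟩
    rw [h0]
    conv_lhs => rw [hx]
    rw [← Submodule.map_comp (LinearMap.id.prod x) J,
      ← Submodule.map_comp (LinearMap.id.prod 0) J, hJ, hJ]
    exact congrFun ((hl x).trans (hl 0).symm) _

end HalesJewett

section Ramsey

variable {F : Type} [Field F] {κ : Type}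

/-- The colouring `χ` of the subspaces of `X` admits a colour `c` and a subspace `S` with
`q(S) = W` and `dim S = dim W + s c` such that all `k`-dimensional `U ≤ S` with `q(U) = W`
have colour `c`. -/
def HasMono {X W : Type*} [AddCommGroup X] [Module F X] [AddCommGroup W] [Module F W]
    (q : X →ₗ[F] W) (k : ℕ) (s : κ → ℕ) (χ : Submodule F X → κ) : Prop :=
  ∃ c : κ, ∃ S : Submodule F X, S.map q = ⊤ ∧ finrank F S = finrank F W + s c ∧
    ∀ U ≤ S, U.map q = ⊤ → finrank F U = k → χ U = c

lemma HasMono.of_map {X Y W : Type*} [AddCommGroup X] [Module F X] [AddCommGroup Y] [Module F Y]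
    [AddCommGroup W] [Module F W] {p : X →ₗ[F] W} {q : Y →ₗ[F] W} {k : ℕ} {s : κ → ℕ}
    {χ : Submodule F Y → κ} (J : X →ₗ[F] Y) (hJ : Function.Injective J) (hqJ : q ∘ₗ J = p)
    (h : HasMono p k s fun U ↦ χ (U.map J)) : HasMono q k s χ := by
  obtain ⟨c, S, hS, hSr, hc⟩ := h
  refine ⟨c, S.map J, by rw [← Submodule.map_comp, hqJ, hS],
    by rw [finrank_map_of_injective hJ, hSr], fun U hU hUq hUk ↦ ?_⟩
  obtain ⟨U', rfl⟩ : ∃ U' : Submodule F X, U'.map J = U :=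
    ⟨U.comap J, Submodule.map_comap_eq_self (hU.trans (LinearMap.map_le_range))⟩
  refine hc U' ((Submodule.map_le_map_iff_of_injective hJ _ _).1 hU) ?_ ?_
  · rw [← hqJ, Submodule.map_comp, hUq]
  · rw [← hUk, finrank_map_of_injective hJ]

/-- Every colouring over every large enough finite-dimensional space above `W` satisfies
`HasMono`. -/
def EventuallyMono.{u} (F : Type) [Field F] (W : Type u) [AddCommGroup W] [Module F W]
    (k : ℕ) (s : κ → ℕ) : Prop :=
  ∃ N : ℕ, ∀ (X : Type u) [AddCommGroup X] [Module F X] [FiniteDimensional F X] (q : X →ₗ[F] W),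
    Function.Surjective q → N ≤ finrank F X → ∀ χ : Submodule F X → κ, HasMono q k s χ

universe u

variable {W : Type u} [AddCommGroup W] [Module F W]

lemma EventuallyMono.of_forall {X : Type u} [AddCommGroup X] [Module F X] [FiniteDimensional F X]
    {p : X →ₗ[F] W} (hp : Function.Surjective p) {k : ℕ} {s : κ → ℕ}
    (h : ∀ χ : Submodule F X → κ, HasMono p k s χ) : EventuallyMono F W k s := by
  refine ⟨finrank F X, fun Y _ _ _ q hq hle χ ↦ ?_⟩
  obtain ⟨J, hJ, hqJ⟩ := exists_injective_over p q hp hq hle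
  exact .of_map J hJ hqJ (h _)

variable [Finite F] [Finite κ]

/-- To find a monochromatic subspace eventually, it suffices to treat colourings of subspaces of
some `E × F` for which the colour of a transversal subspace only depends on its shadow in `E`. -/
lemma EventuallyMono.of_transversal {E : Type u} [AddCommGroup E] [Module F E]
    [FiniteDimensional F E] {p : E →ₗ[F] W} (hp : Function.Surjective p) {k : ℕ} {s : κ → ℕ}
    (h : ∀ χ : Submodule F (E × F) → κ,
      (∀ U, Disjoint U (LinearMap.ker (LinearMap.fst F E F)) →
        χ U = χ ((U.map (LinearMap.fst F E F)).prod ⊥)) →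
      HasMono (p ∘ₗ LinearMap.fst F E F) k s χ) : EventuallyMono F W k s := by
  obtain ⟨ι, _, hι⟩ := exists_transversal_color (F := F) E κ
  refine .of_forall (X := E × (ι → F)) (p := p ∘ₗ LinearMap.fst F E (ι → F))
    (hp.comp LinearMap.fst_surjective) fun χ ↦ ?_
  obtain ⟨J, hJ, hfst, hχ⟩ := hι χ
  exact .of_map J hJ (by rw [LinearMap.comp_assoc, hfst]) (h _ hχ)

variable [FiniteDimensional F W]

lemma eventuallyMono_finrank (m : ℕ) :
    EventuallyMono F W (finrank F W) (fun _ : κ ↦ m) := by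
  induction m with
  | zero =>
    refine .of_forall (X := W) (p := LinearMap.id) Function.surjective_id fun χ ↦
      ⟨χ ⊤, ⊤, Submodule.map_id _, finrank_top F W, fun U _ hU _ ↦ ?_⟩
    rw [← hU, Submodule.map_id]
  | succ m ih =>
    obtain ⟨N, hN⟩ := ih
    have hp : Function.Surjective (LinearMap.fst F W (Fin N → F)) := LinearMap.fst_surjective
    refine .of_transversal hp fun χ hχ ↦ ?_
    obtain ⟨c, S, hS, hSr, hc⟩ := hN _ _ hp (by simp) fun U ↦ χ (U.prod ⊥)
    refine ⟨c, S.prod ⊤, by rw [Submodule.map_comp, Submodule.prod_map_fst, hS],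
      by rw [finrank_prod_submodule, hSr, finrank_top, finrank_self, add_assoc],
      fun U hU hUq hUk ↦ ?_⟩
    have hdisj : Disjoint U (LinearMap.ker (LinearMap.fst F (W × (Fin N → F)) F)) :=
      (disjoint_ker_of_finrank_le _ (by rw [hUq, finrank_top, hUk])).mono_right
        (LinearMap.ker_le_ker_comp _ _)
    rw [hχ U hdisj]
    refine hc _ ((Submodule.map_mono hU).trans (Submodule.prod_map_fst _ _).le) ?_ ?_
    · rw [← Submodule.map_comp, hUq]
    · rw [finrank_map_of_disjoint_ker hdisj, hUk]

lemma eventuallyMono_succ {k : ℕ} (hk : finrank F W ≤ k)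
    (ih : ∀ m, EventuallyMono F W k (fun _ : κ ↦ m)) (s : κ → ℕ) :
    EventuallyMono F W (k + 1) s := by
  classical
  have := Fintype.ofFinite κ
  induction hn : ∑ c, s c using Nat.strong_induction_on generalizing s with
  | _ n IH =>
  subst hn
  by_cases h0 : ∃ c, s c = 0
  · obtain ⟨c, hc⟩ := h0
    refine .of_forall (X := W) (p := LinearMap.id) Function.surjective_id fun χ ↦
      ⟨c, ⊤, Submodule.map_id _, by rw [finrank_top, hc, add_zero], fun U _ _ hU ↦ ?_⟩
    have := Submodule.finrank_le U
    omega
  push Not at h0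
  have hpred : ∀ c, EventuallyMono F W (k + 1) (Function.update s c (s c - 1)) := fun c ↦ by
    refine IH _ (Finset.sum_lt_sum (fun d _ ↦ ?_) ⟨c, Finset.mem_univ _, ?_⟩) _ rfl
    · rcases eq_or_ne d c with rfl | hd
      · simp
      · simp [hd]
    · have := h0 c
      simp
      omega
  choose M hM using hpred
  obtain ⟨N, hN⟩ := ih (∑ c, M c)
  have hp : Function.Surjective (LinearMap.fst F W (Fin N → F)) := LinearMap.fst_surjective
  refine .of_transversal hp fun χ hχ ↦ ?_
  obtain ⟨c, S, hS, hSr, hc⟩ := hN _ _ hp (by simp) fun U ↦ χ (U.prod ⊤)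
  have hSurj : Function.Surjective (LinearMap.fst F W (Fin N → F) ∘ₗ S.subtype) := by
    rw [← LinearMap.range_eq_top, LinearMap.range_comp, Submodule.range_subtype, hS]
  have hle : M c ≤ finrank F S := by
    have := Finset.single_le_sum (fun c _ ↦ Nat.zero_le (M c)) (Finset.mem_univ c)
    exact this.trans (hSr ▸ Nat.le_add_left _ _)
  obtain ⟨d, T, hTS, hT, hTr, hd⟩ : ∃ d, ∃ T ≤ S, T.map (LinearMap.fst F W (Fin N → F)) = ⊤ ∧
      finrank F T = finrank F W + Function.update s c (s c - 1) d ∧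
      ∀ U ≤ T, U.map (LinearMap.fst F W (Fin N → F)) = ⊤ → finrank F U = k + 1 →
        χ (U.prod ⊥) = d := by
    obtain ⟨d, T, hT, hTr, hd⟩ := hM c S _ hSurj hle fun U ↦ χ ((U.map S.subtype).prod ⊥)
    refine ⟨d, T.map S.subtype, Submodule.map_subtype_le S T, by rw [← Submodule.map_comp, hT],
      by rw [finrank_map_of_injective S.injective_subtype, hTr], fun U hU hUq hUk ↦ ?_⟩
    have hUS : (U.comap S.subtype).map S.subtype = U :=
      Submodule.map_comap_eq_self (by simpa using hU.trans (Submodule.map_subtype_le S T))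
    have := hd (U.comap S.subtype)
      ((Submodule.map_le_map_iff_of_injective S.injective_subtype _ _).1 (hUS.trans_le hU))
      (by rw [Submodule.map_comp, hUS, hUq])
      (by rw [← finrank_map_of_injective S.injective_subtype, hUS, hUk])
    simpa only [hUS] using this
  have hshadow : ∀ U : Submodule F ((W × (Fin N → F)) × F), U.map (LinearMap.fst F (W × (Fin N → F)) F) ≤ T →
      U.map (LinearMap.fst F W (Fin N → F) ∘ₗ LinearMap.fst F (W × (Fin N → F)) F) = ⊤ →
      finrank F U = k + 1 → Disjoint U (LinearMap.ker (LinearMap.fst F (W × (Fin N → F)) F)) →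
      χ U = d := fun U hU hUq hUk hdisj ↦ by
    rw [hχ U hdisj]
    exact hd _ hU (by rw [← Submodule.map_comp, hUq])
      (by rw [finrank_map_of_disjoint_ker hdisj, hUk])
  rcases eq_or_ne d c with rfl | hdc
  · refine ⟨d, T.prod ⊤, by rw [Submodule.map_comp, Submodule.prod_map_fst, hT], ?_,
      fun U hU hUq hUk ↦ ?_⟩
    · have := h0 d
      rw [finrank_prod_submodule, hTr, finrank_top, finrank_self, Function.update_self]
      omega
    · have hUT := (Submodule.map_mono hU).trans (Submodule.prod_map_fst T ⊤).le
      by_cases hdisj : Disjoint U (LinearMap.ker (LinearMap.fst F (W × (Fin N → F)) F))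
      · exact hshadow U hUT hUq hUk hdisj
      · have hUe := eq_prod_top U hdisj
        rw [hUe]
        refine hc _ (hUT.trans hTS) (by rw [← Submodule.map_comp, hUq]) ?_
        rw [hUe, finrank_prod_submodule, finrank_top, finrank_self] at hUk
        omega
  · refine ⟨d, T.prod ⊥, by rw [Submodule.map_comp, Submodule.prod_map_fst, hT], ?_,
      fun U hU hUq hUk ↦ hshadow U ?_ hUq hUk ?_⟩
    · rw [finrank_prod_submodule, hTr, finrank_bot, Function.update_of_ne hdc, add_zero]
    · exact (Submodule.map_mono hU).trans (Submodule.prod_map_fst T ⊥).le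
    · rw [Submodule.disjoint_def]
      rintro ⟨a, b⟩ hab h
      exact Prod.ext h (hU hab).2

/-- Ramsey theorem for finite-dimensional spaces over `W` and a finite field. -/
theorem eventuallyMono {k : ℕ} (hk : finrank F W ≤ k) (m : ℕ) :
    EventuallyMono F W k (fun _ : κ ↦ m) := by
  induction k, hk using Nat.le_induction generalizing m with
  | base => exact eventuallyMono_finrank m
  | succ k hk ih => exact eventuallyMono_succ hk ih _

end Ramsey

end SubspaceRamsey

open SubspaceRamsey

/-- `V` is a countably infinite dimensional vector space over `GF(2)`, `π` an idempotent
linear map with finite dimensional image `A1` of dimension at most `1`, and `A` a finite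
dimensional subspace with `A1 < A`.  Then the family `K_{A1}` of finite dimensional
subspaces `U` with `π(U) = A1` has the Ramsey property with respect to copies of `A` in
copies of `B ∈ K_{A1}`. -/
theorem ramsey_for_K_A1_dim_le_one
    (V : Type*) [AddCommGroup V] [Module (ZMod 2) V]
    (hrank : Module.rank (ZMod 2) V = Cardinal.aleph0)
    (π : V →ₗ[ZMod 2] V) (hidem : π ∘ₗ π = π)
    (A1 : Submodule (ZMod 2) V) (hA1 : LinearMap.range π = A1)
    (hA1fin : FiniteDimensional (ZMod 2) A1)
    (hA1dim : finrank (ZMod 2) A1 ≤ 1)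
    (A : Submodule (ZMod 2) V)
    (hAfin : FiniteDimensional (ZMod 2) A)
    (hA1A : A1 < A)
    (r : ℕ) (B : Submodule (ZMod 2) V)
    (hBfin : FiniteDimensional (ZMod 2) B)
    (hBK : Submodule.map π B = A1)
    (hAB : A ≤ B) :
    ∃ C : Submodule (ZMod 2) V,
      FiniteDimensional (ZMod 2) C ∧ Submodule.map π C = A1 ∧
      ∀ ξ : Submodule (ZMod 2) V → Fin r,
        ∃ B' : Submodule (ZMod 2) V,
          B' ≤ C ∧ Submodule.map π B' = A1 ∧
          finrank (ZMod 2) B' = finrank (ZMod 2) B ∧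
          ∀ U U' : Submodule (ZMod 2) V,
            U ≤ B' → Submodule.map π U = A1 → finrank (ZMod 2) U = finrank (ZMod 2) A →
            U' ≤ B' → Submodule.map π U' = A1 → finrank (ZMod 2) U' = finrank (ZMod 2) A →
            ξ U = ξ U' := by
  have hA1B : finrank (ZMod 2) A1 ≤ finrank (ZMod 2) B :=
    Submodule.finrank_mono (hA1A.le.trans hAB)
  obtain ⟨N, hN⟩ := eventuallyMono (F := ZMod 2) (κ := Fin r)
    (Submodule.finrank_mono hA1A.le) (finrank (ZMod 2) B - finrank (ZMod 2) A1)
  have hπ : ∀ v, π v ∈ A1 := fun v ↦ hA1 ▸ LinearMap.mem_range_self π v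
  have hfix : ∀ a ∈ A1, π a = a := by
    rw [← hA1]
    rintro _ ⟨v, rfl⟩
    exact LinearMap.congr_fun hidem v
  obtain ⟨f, hf⟩ := le_rank_iff_exists_linearMap.1
    ((Cardinal.natCast_le_aleph0 (n := N)).trans hrank.ge)
  let C : Submodule (ZMod 2) V := A1 ⊔ LinearMap.range f
  have hNC : N ≤ finrank (ZMod 2) C := by
    calc N = finrank (ZMod 2) (LinearMap.range f) := by
          rw [LinearMap.finrank_range_of_inj hf, finrank_fin_fun]
      _ ≤ _ := Submodule.finrank_mono le_sup_right
  let q : V →ₗ[ZMod 2] A1 := π.codRestrict A1 hπ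
  have hq : ∀ U : Submodule (ZMod 2) V, U.map π = A1 ↔ U.map q = ⊤ := fun U ↦ by
    rw [← (Submodule.map_injective_of_injective A1.injective_subtype).eq_iff,
      ← Submodule.map_comp, Submodule.map_subtype_top, LinearMap.subtype_comp_codRestrict]
  have hqC : Function.Surjective (q ∘ₗ C.subtype) := fun a ↦
    ⟨⟨a, le_sup_left (a := A1) a.2⟩, Subtype.ext (hfix a a.2)⟩
  refine ⟨C, inferInstance, ?_, fun ξ ↦ ?_⟩
  · rw [hq, ← LinearMap.range_eq_top.2 hqC, LinearMap.range_comp, Submodule.range_subtype]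
  obtain ⟨c, S, hS, hSr, hc⟩ := hN C _ hqC hNC fun U ↦ ξ (U.map C.subtype)
  have key : ∀ U ≤ S.map C.subtype, U.map π = A1 → finrank (ZMod 2) U = finrank (ZMod 2) A →
      ξ U = c := fun U hU hUπ hUk ↦ by
    have hUC : (U.comap C.subtype).map C.subtype = U :=
      Submodule.map_comap_eq_self (by simpa using hU.trans (Submodule.map_subtype_le C S))
    have := hc (U.comap C.subtype)
      ((Submodule.map_le_map_iff_of_injective C.injective_subtype _ _).1 (hUC.trans_le hU))
      (by rw [Submodule.map_comp, hUC, ← hq, hUπ])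
      (by rw [← finrank_map_of_injective C.injective_subtype, hUC, hUk])
    simpa only [hUC] using this
  refine ⟨S.map C.subtype, Submodule.map_subtype_le C S, ?_, ?_,
    fun U U' h1 h2 h3 h4 h5 h6 ↦ (key U h1 h2 h3).trans (key U' h4 h5 h6).symm⟩
  · rw [hq, ← Submodule.map_comp, hS]
  · rw [finrank_map_of_injective C.injective_subtype, hSr]
    exact Nat.add_sub_of_le hA1B
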